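/- arXiv:math/0512472 — 3 statements merged into one kernel-verified Lean document; each statement's English description precedes it below -/
import Mathlib

section
/- Let c₁, c₂ ∈ ℚˣ, let B = ℍ[ℚ, c₁, c₂], let L be a number field, let B_L = ℍ[L, c₁, c₂], and let ι : B → B_L be the natural injective ℚ-algebra homomorphism induced by ℚ ⊆ L (which commutes with the standard involutions). Let O ⊆ B be a subring containing 1 and closed under star, and set Λ_O = {y ∈ O : y + star y = 0} ∩ (ℤ·1 + 2O). Let R be the 𝓞_L-submodule of B_L spanned by ι(O). Then {x ∈ R : x + star x = 0} ∩ (𝓞_L·1 + 2R) equals the 𝓞_L-submodule of B_L spanned by ι(Λ_O). -/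
open NumberField Quaternion

/-!
Write `A = 𝓞_L`. Since `1 ∈ O`, the subgroup `ℤ·1 + 2O` lies in `O`, so `Λ_O` is the kernel of the
reduced trace on `ℤ·1 + 2O`, and likewise over `A` for `R`. Forming `A`-spans of images commutes
with sums and scaling, and takes `ℤ·1` to `A·1`; as `A` is flat over `ℤ`, it also commutes with the
kernel of the trace once `A ⊗_ℤ B → B_L` is injective. This map factors as
`A ⊗_ℤ B ↪ L ⊗_ℤ B ≃ L ⊗_ℚ B ≃ B_L`.
-/

open Function Submodule
open scoped Pointwise TensorProduct

section SpanImage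

variable {R A M N : Type*} [CommRing R] [CommRing A] [Algebra R A]
  [AddCommGroup M] [Module R M] [AddCommGroup N] [Module R N] [Module A N] [IsScalarTower R A N]

theorem span_image_sup (f : M →ₗ[R] N) (P Q : Submodule R M) :
    span A (f '' ↑(P ⊔ Q)) = span A (f '' P) ⊔ span A (f '' Q) := by
  rw [← map_coe f (P ⊔ Q), Submodule.map_sup, ← span_eq (P.map f), ← span_eq (Q.map f),
    ← span_union, span_span_of_tower, span_union, map_coe, map_coe]

theorem span_image_pointwise_smul (f : M →ₗ[R] N) (r : R) (P : Submodule R M) :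
    span A (f '' ↑(r • P)) = algebraMap R A r • span A (f '' P) := by
  rw [← span_smul, coe_pointwise_smul, Set.image_smul_comm _ _ _ (map_smul f r)]
  simp only [← Set.image_smul, algebraMap_smul]

theorem span_image_one {D E : Type*} [Ring D] [Algebra R D] [Ring E] [Module R E] [Algebra A E]
    [IsScalarTower R A E] {f : D →ₗ[R] E} (hf : f 1 = 1) :
    span A (f '' ↑(1 : Submodule R D)) = 1 := by
  rw [one_eq_span, one_eq_span, ← map_coe, map_span, span_span_of_tower, Set.image_singleton, hf]

variable {M' N' : Type*} [AddCommGroup M'] [Module R M']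
  [AddCommGroup N'] [Module R N'] [Module A N'] [IsScalarTower R A N']

theorem span_image_ker [Module.Flat R A] (f : M →ₗ[R] N) {f' : M' →ₗ[R] N'}
    (hf' : Injective (f'.liftBaseChange A)) {g : M →ₗ[R] M'} {G : N →ₗ[A] N'}
    (hG : ∀ x, G (f x) = f' (g x)) :
    span A (f '' LinearMap.ker g) = span A (Set.range f) ⊓ LinearMap.ker G := by
  refine le_antisymm (span_le.mpr ?_) ?_
  · rintro _ ⟨x, hx, rfl⟩
    exact ⟨subset_span ⟨x, rfl⟩, by simp [hG, LinearMap.mem_ker.mp hx]⟩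
  · have hcomm : G ∘ₗ f.liftBaseChange A = f'.liftBaseChange A ∘ₗ g.baseChange A := by
      ext x
      simp [hG]
    rintro y ⟨hy, hGy⟩
    rw [← LinearMap.coe_range, SetLike.mem_coe, ← LinearMap.range_liftBaseChange] at hy
    obtain ⟨t, rfl⟩ := hy
    have ht : g.baseChange A t = 0 :=
      hf' (by simpa using (LinearMap.congr_fun hcomm t).symm.trans hGy)
    obtain ⟨s, rfl⟩ : t ∈ LinearMap.range ((LinearMap.ker g).subtype.baseChange A) :=
      (Module.Flat.lTensor_exact A (LinearMap.exact_subtype_ker_map g) t).mp ht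
    have hcomp : (f ∘ₗ (LinearMap.ker g).subtype).liftBaseChange A =
        f.liftBaseChange A ∘ₗ (LinearMap.ker g).subtype.baseChange A := by
      ext x
      simp
    have hs : f.liftBaseChange A ((LinearMap.ker g).subtype.baseChange A s) ∈
        LinearMap.range ((f ∘ₗ (LinearMap.ker g).subtype).liftBaseChange A) :=
      ⟨s, by rw [hcomp]; rfl⟩
    rwa [LinearMap.range_liftBaseChange, LinearMap.range_comp, range_subtype, map_coe] at hs

theorem span_image_inf_ker [Module.Flat R A] (f : M →ₗ[R] N) {f' : M' →ₗ[R] N'}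
    (hf' : Injective (f'.liftBaseChange A)) {g : M →ₗ[R] M'} {G : N →ₗ[A] N'}
    (hG : ∀ x, G (f x) = f' (g x)) (P : Submodule R M) :
    span A (f '' ↑(P ⊓ LinearMap.ker g)) = span A (f '' P) ⊓ LinearMap.ker G := by
  convert! span_image_ker (f ∘ₗ P.subtype) hf' (g := g ∘ₗ P.subtype) (G := G) fun x => hG x
  · ext y
    simp [and_assoc, and_left_comm]
  · simp [Set.range_comp]

end SpanImage

section BaseChange

variable {R A K L M N : Type*} [CommRing R] [CommRing A] [CommRing K] [CommRing L]
  [Algebra R A] [Algebra R K] [Algebra R L] [Algebra K L] [Algebra A L]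
  [IsScalarTower R K L] [IsScalarTower R A L]

theorem injective_liftBaseChange_restrictScalars (S : Submonoid R) [IsLocalization S K]
    [FaithfulSMul A L]
    [AddCommGroup M] [Module R M] [Module K M] [IsScalarTower R K M] [Module.Flat R M]
    [AddCommGroup N] [Module R N] [Module K N] [Module A N] [Module L N]
    [IsScalarTower R K N] [IsScalarTower R A N] [IsScalarTower A L N] [IsScalarTower K L N]
    {f : M →ₗ[K] N} (hf : Injective (f.liftBaseChange L)) :
    Injective ((f.restrictScalars R).liftBaseChange A) := by
  let e := (IsLocalization.moduleTensorEquiv S K L M).restrictScalars R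
  let j := (IsScalarTower.toAlgHom R A L).toLinearMap.rTensor M
  have hj : Injective j :=
    Module.Flat.rTensor_preserves_injective_linearMap _ (FaithfulSMul.algebraMap_injective A L)
  have hfactor (t : A ⊗[R] M) :
      (f.restrictScalars R).liftBaseChange A t = f.liftBaseChange L (e.symm (j t)) := by
    induction t with
    | zero => simp
    | add t s ht hs => simp only [map_add, ht, hs]
    | tmul a x =>
      have : e.symm (j (a ⊗ₜ x)) = algebraMap A L a ⊗ₜ x := rfl
      simp [this]
  intro t s hts
  rw [hfactor, hfactor] at hts
  exact hj (e.symm.injective (hf hts))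

theorem injective_liftBaseChange_of_basis {κ : Type*} [AddCommGroup M] [Module K M]
    [AddCommGroup N] [Module K N] [Module L N] [IsScalarTower K L N]
    (b : Module.Basis κ K M) (b' : Module.Basis κ L N) {f : M →ₗ[K] N} (hf : ∀ i, f (b i) = b' i) :
    Injective (f.liftBaseChange L) := by
  have he : f.liftBaseChange L = (b.baseChange L).equiv b' (Equiv.refl κ) :=
    (b.baseChange L).ext fun i => by
      rw [LinearEquiv.coe_coe, Module.Basis.equiv_apply]
      simp [hf]
  rw [he]
  exact LinearEquiv.injective _

end BaseChange

section Quaternion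

variable {R A K L : Type*} [CommRing R] [CommRing A] [CommRing K] [CommRing L]
  [Algebra R A] [Algebra R K] [Algebra R L] [Algebra K L] [Algebra A L]
  [IsScalarTower R K L] [IsScalarTower R A L]

theorem injective_liftBaseChange_quaternion {a b : K}
    {f : ℍ[K,a,b] →ₗ[K] ℍ[L,algebraMap K L a,algebraMap K L b]}
    (hf : ∀ x, f x = ⟨algebraMap K L x.re, algebraMap K L x.imI, algebraMap K L x.imJ,
      algebraMap K L x.imK⟩) :
    Injective (f.liftBaseChange L) := by
  let e := QuaternionAlgebra.basisOneIJK a 0 b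
  let e' := QuaternionAlgebra.basisOneIJK (algebraMap K L a) 0 (algebraMap K L b)
  have hcoord (x : ℍ[K,a,b]) (j : Fin 4) : e'.repr (f x) j = algebraMap K L (e.repr x j) := by
    rw [QuaternionAlgebra.coe_basisOneIJK_repr, QuaternionAlgebra.coe_basisOneIJK_repr, hf]
    fin_cases j <;> simp
  refine injective_liftBaseChange_of_basis e e' fun i => e'.ext_elem fun j => ?_
  rw [hcoord, Module.Basis.repr_self, Module.Basis.repr_self, Finsupp.single_apply,
    Finsupp.single_apply, apply_ite (algebraMap K L), map_one, map_zero]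

variable (R) in
/-- The reduced trace `x ↦ x + star x`, whose kernel is the trace-zero part. It is taken with values
in the quaternion algebra rather than in the base ring `K`. -/
def reducedTrace (a b : K) : ℍ[K,a,b] →ₗ[R] ℍ[K,a,b] where
  toFun x := x + star x
  map_add' x y := by rw [star_add, add_add_add_comm]
  map_smul' r x := by rw [QuaternionAlgebra.star_smul', ← smul_add, RingHom.id_apply]

/-- The Gross lattice `P⁰ ∩ (R·1 + 2P)` of an `R`-submodule `P`, where `P⁰` is the trace-zero part.
The submodule `1` is `R·1`, and the scalar is `(2 : R)` because the natural number `2` would act on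
submodules trivially, `2 • P = P ⊔ P = P`. -/
def grossLattice {a b : K} (P : Submodule R ℍ[K,a,b]) : Submodule R ℍ[K,a,b] :=
  P ⊓ (1 ⊔ (2 : R) • P) ⊓ LinearMap.ker (reducedTrace R a b)

theorem mem_grossLattice {a b : K} {P : Submodule R ℍ[K,a,b]} {x : ℍ[K,a,b]} :
    x ∈ grossLattice P ↔
      x ∈ P ∧ x + star x = 0 ∧ ∃ n : R, ∃ y ∈ P, x = algebraMap R ℍ[K,a,b] n + 2 * y := by
  simp only [grossLattice, mem_inf, mem_sup, mem_one, mem_smul_pointwise_iff_exists,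
    LinearMap.mem_ker]
  simp [reducedTrace, two_smul, two_mul, eq_comm, and_left_comm, and_comm]

theorem grossLattice_eq_of_one_mem {a b : K} {P : Submodule R ℍ[K,a,b]} (h : 1 ∈ P) :
    grossLattice P = (1 ⊔ (2 : R) • P) ⊓ LinearMap.ker (reducedTrace R a b) := by
  rw [grossLattice, inf_eq_right.mpr (sup_le (one_le.mpr h) (smul_le_self_of_tower 2 P))]

theorem stmt7_general [IsFractionRing R K] [Module.Flat R A] [FaithfulSMul A L] {a b : K}
    (ι : ℍ[K,a,b] →ₐ[K] ℍ[L,algebraMap K L a,algebraMap K L b])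
    (hι : ∀ x, ι x = ⟨algebraMap K L x.re, algebraMap K L x.imI, algebraMap K L x.imJ,
      algebraMap K L x.imK⟩)
    (O : Submodule R ℍ[K,a,b]) (hO : 1 ∈ O) :
    span A (ι '' grossLattice O) = grossLattice (span A (ι '' O)) := by
  let f := ι.toLinearMap.restrictScalars R
  have hspan : span A (f '' ↑(1 ⊔ (2 : R) • O)) = 1 ⊔ (2 : A) • span A (f '' O) := by
    rw [span_image_sup, span_image_one (map_one ι), span_image_pointwise_smul, map_ofNat]
  have hf : Injective (f.liftBaseChange A) :=
    have := IsLocalization.flat K (nonZeroDivisors R)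
    have : Module.Flat R ℍ[K,a,b] := .trans R K _
    injective_liftBaseChange_restrictScalars (nonZeroDivisors R)
      (injective_liftBaseChange_quaternion (f := ι.toLinearMap) hι)
  have hstar (x) : star (ι x) = ι (star x) := by
    rw [hι, hι]
    ext <;> simp
  have htrace (x) : reducedTrace A _ _ (f x) = f (reducedTrace R a b x) := by
    change ι x + star (ι x) = ι (x + star x)
    rw [hstar, map_add]
  have h1 : 1 ∈ span A (f '' O) := subset_span ⟨1, hO, map_one ι⟩
  change span A (f '' grossLattice O) = grossLattice (span A (f '' O))
  rw [grossLattice_eq_of_one_mem hO, grossLattice_eq_of_one_mem h1, ← hspan]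
  exact span_image_inf_ker f hf htrace _

end Quaternion

/-- Let `B = ℍ[ℚ, c₁, c₂]`, `L` a number field, `B_L = ℍ[L, c₁, c₂]` and
`ι : B → B_L` the natural map. Let `O ⊆ B` be a star-stable subring and
`Λ_O = O⁰ ∩ (ℤ·1 + 2O)` (trace-zero part). If `R` is the `𝓞 L`-span of `ι(O)`,
then `{x ∈ R : x + star x = 0} ∩ (𝓞_L·1 + 2R)` is the `𝓞 L`-span of `ι(Λ_O)`. -/
theorem stmt7 (c₁ c₂ : ℚ) (hc₁ : c₁ ≠ 0) (hc₂ : c₂ ≠ 0)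
    (L : Type) [Field L] [NumberField L]
    (ι : ℍ[ℚ, c₁, c₂] →ₐ[ℚ] ℍ[L, algebraMap ℚ L c₁, algebraMap ℚ L c₂])
    (hι : ∀ x : ℍ[ℚ, c₁, c₂], ι x =
      ⟨algebraMap ℚ L x.re, algebraMap ℚ L x.imI, algebraMap ℚ L x.imJ,
        algebraMap ℚ L x.imK⟩)
    (O : Subring ℍ[ℚ, c₁, c₂]) (hO : ∀ x ∈ O, star x ∈ O)
    (Λ : Set ℍ[ℚ, c₁, c₂])
    (hΛ : Λ = {y : ℍ[ℚ, c₁, c₂] | y ∈ O ∧ y + star y = 0 ∧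
      ∃ n : ℤ, ∃ z ∈ O, y = (n : ℍ[ℚ, c₁, c₂]) + 2 * z})
    (R : Submodule (𝓞 L) ℍ[L, algebraMap ℚ L c₁, algebraMap ℚ L c₂])
    (hR : R = Submodule.span (𝓞 L) (ι '' (O : Set ℍ[ℚ, c₁, c₂]))) :
    {x : ℍ[L, algebraMap ℚ L c₁, algebraMap ℚ L c₂] | x ∈ R ∧ x + star x = 0 ∧
        ∃ a : 𝓞 L, ∃ y ∈ R,
          x = algebraMap (𝓞 L) ℍ[L, algebraMap ℚ L c₁, algebraMap ℚ L c₂] a + 2 * y}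
      = (Submodule.span (𝓞 L) (ι '' Λ) : Set _) := by
  let O' : Submodule ℤ ℍ[ℚ, c₁, c₂] := O.toAddSubgroup.toIntSubmodule
  have hΛ' : Λ = grossLattice O' := hΛ.trans (Set.ext fun _ => (mem_grossLattice (P := O')).symm)
  rw [hR, hΛ', stmt7_general ι hι O' O.one_mem]
  exact Set.ext fun _ => mem_grossLattice.symm
end

section
/- Let c₁, c₂ ∈ ℚˣ and B = ℍ[ℚ, c₁, c₂], and assume B has no zero divisors. Let O ⊆ B be a subring closed under star with O ∩ ℚ·1 = ℤ·1. Let D > 1 be a squarefree integer. Then there exists a matrix C ∈ M₂(B) with all entries in O satisfying Cᴴ = C and C² = D·I₂ if and only if there exist s ∈ ℤ and r ∈ O with s²·1 + r·star r = D·1 in B. -/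
open Quaternion Matrix

/-! If `C` is Hermitian with entries in `O`, the top left entry of `C ^ 2` is `s ^ 2 + r * star r`,
where `s` is a self-adjoint element of `O`, hence an integer. Conversely, if the self-adjoint
elements of `O` commute with all of `O`, then `!![s, r; star r, -s]` squares to the scalar
`s ^ 2 + r * star r`; the normality of `r` needed here holds because `r + star r` is
self-adjoint. -/

theorem mul_self_apply_self_of_isHermitian {n A : Type*} [Fintype n] [NonUnitalNonAssocSemiring A]
    [Star A] {C : Matrix n n A} (hC : C.IsHermitian) (i : n) :
    (C * C) i i = ∑ j, C i j * star (C i j) := by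
  simp only [Matrix.mul_apply, hC.apply]

theorem isStarNormal_of_commute_add_star {A : Type*} [NonUnitalNonAssocRing A] [Star A] {x : A}
    (h : Commute (x + star x) x) : IsStarNormal x :=
  ⟨by simpa only [add_sub_cancel_left] using h.sub_left (Commute.refl x)⟩

/-- The matrix with rows `s, r` and `star r, -s`. For self-adjoint `s` this is the general
Hermitian `2 × 2` matrix with opposite diagonal entries; it serves as a square root of a scalar
matrix. -/
def tracelessHermitian {A : Type*} [Neg A] [Star A] (s r : A) : Matrix (Fin 2) (Fin 2) A :=
  !![s, r; star r, -s]

theorem tracelessHermitian_apply_mem {A : Type*} [Ring A] [Star A] {O : Subring A} {s r : A}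
    (hs : s ∈ O) (hr : r ∈ O) (hr' : star r ∈ O) (i j : Fin 2) :
    tracelessHermitian s r i j ∈ O := by
  fin_cases i <;> fin_cases j
  exacts [hs, hr, hr', O.neg_mem hs]

theorem isHermitian_tracelessHermitian {A : Type*} [AddGroup A] [StarAddMonoid A] {s : A}
    (hs : IsSelfAdjoint s) (r : A) : (tracelessHermitian s r).IsHermitian := by
  ext i j
  fin_cases i <;> fin_cases j <;> simp [tracelessHermitian, hs.star_eq]

theorem tracelessHermitian_sq {A : Type*} [Ring A] [StarRing A] {s r : A} (hs : IsSelfAdjoint s)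
    (hsr : Commute s r) [hr : IsStarNormal r] :
    tracelessHermitian s r ^ 2 =
      (s ^ 2 + r * star r) • (1 : Matrix (Fin 2) (Fin 2) A) := by
  have hsr' : s * star r = star r * s := by simpa only [hs.star_eq] using hsr.star_star.eq
  have hrr : star r * r = r * star r := hr.star_comm_self.eq
  ext i j
  fin_cases i <;> fin_cases j <;>
    simp [tracelessHermitian, pow_two, hsr.eq, hsr', hrr, add_comm]

theorem exists_isHermitian_sq_eq_smul_one_iff {A : Type*} [Ring A] [StarRing A] (O : Subring A)
    (hO : ∀ x ∈ O, star x ∈ O)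
    (hcomm : ∀ x ∈ O, IsSelfAdjoint x → ∀ y ∈ O, Commute x y) (d : A) :
    (∃ C : Matrix (Fin 2) (Fin 2) A, (∀ i j, C i j ∈ O) ∧ C.IsHermitian ∧
        C ^ 2 = d • (1 : Matrix (Fin 2) (Fin 2) A)) ↔
      ∃ s ∈ O, IsSelfAdjoint s ∧ ∃ r ∈ O, s ^ 2 + r * star r = d := by
  constructor
  · rintro ⟨C, hC, hherm, hsq⟩
    have hs : IsSelfAdjoint (C 0 0) := hherm.apply 0 0
    refine ⟨C 0 0, hC 0 0, hs, C 0 1, hC 0 1, ?_⟩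
    calc C 0 0 ^ 2 + C 0 1 * star (C 0 1)
        = (C ^ 2) 0 0 := by
          rw [pow_two C, mul_self_apply_self_of_isHermitian hherm, Fin.sum_univ_two, hs.star_eq,
            pow_two]
      _ = d := by simp [hsq]
  · rintro ⟨s, hsO, hs, r, hrO, rfl⟩
    have hr : IsStarNormal r := isStarNormal_of_commute_add_star <|
      hcomm _ (O.add_mem hrO (hO r hrO)) (IsSelfAdjoint.add_star_self r) r hrO
    exact ⟨tracelessHermitian s r, tracelessHermitian_apply_mem hsO hrO (hO r hrO),
      isHermitian_tracelessHermitian hs r, tracelessHermitian_sq hs (hcomm s hsO hs r hrO)⟩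

theorem stmt14_general {A : Type*} [Ring A] [StarRing A] (O : Subring A)
    (hO : ∀ x ∈ O, star x ∈ O) (hint : ∀ x ∈ O, IsSelfAdjoint x → ∃ n : ℤ, x = n) (d : A) :
    (∃ C : Matrix (Fin 2) (Fin 2) A, (∀ i j, C i j ∈ O) ∧ C.IsHermitian ∧
        C ^ 2 = d • (1 : Matrix (Fin 2) (Fin 2) A)) ↔
      ∃ s : ℤ, ∃ r ∈ O, (s : A) ^ 2 + r * star r = d := by
  have hcomm : ∀ x ∈ O, IsSelfAdjoint x → ∀ y ∈ O, Commute x y := by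
    intro x hxO hx y _
    obtain ⟨n, rfl⟩ := hint x hxO hx
    exact Int.cast_commute n y
  rw [exists_isHermitian_sq_eq_smul_one_iff O hO hcomm]
  constructor
  · rintro ⟨x, hxO, hx, hr⟩
    obtain ⟨s, rfl⟩ := hint x hxO hx
    exact ⟨s, hr⟩
  · rintro ⟨s, hr⟩
    exact ⟨s, intCast_mem O s, .intCast s, hr⟩

/-- Let `B = ℍ[ℚ, c₁, c₂]` have no zero divisors, `O ⊆ B` a star-stable subring with
`O ∩ ℚ·1 = ℤ·1`, and `D > 1` squarefree. Then there is a matrix `C ∈ M₂(O)` with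
`Cᴴ = C` and `C² = D·I₂` if and only if there are `s ∈ ℤ` and `r ∈ O` with
`s²·1 + r·star r = D·1`. -/
theorem stmt14 (c₁ c₂ : ℚ) (hc₁ : c₁ ≠ 0) (hc₂ : c₂ ≠ 0)
    (hB : ∀ x y : ℍ[ℚ, c₁, c₂], x * y = 0 → x = 0 ∨ y = 0)
    (O : Subring ℍ[ℚ, c₁, c₂]) (hO : ∀ x ∈ O, star x ∈ O)
    (hOQ : ∀ x : ℍ[ℚ, c₁, c₂],
      (x ∈ O ∧ ∃ q : ℚ, x = algebraMap ℚ ℍ[ℚ, c₁, c₂] q) ↔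
        ∃ n : ℤ, x = (n : ℍ[ℚ, c₁, c₂]))
    (D : ℤ) (hD : 1 < D) (hsf : Squarefree D) :
    (∃ C : Matrix (Fin 2) (Fin 2) ℍ[ℚ, c₁, c₂], (∀ i j, C i j ∈ O) ∧ Cᴴ = C ∧
        C ^ 2 = (D : ℍ[ℚ, c₁, c₂]) • (1 : Matrix (Fin 2) (Fin 2) ℍ[ℚ, c₁, c₂]))
      ↔ ∃ s : ℤ, ∃ r ∈ O,
          ((s : ℍ[ℚ, c₁, c₂])) ^ 2 + r * star r = (D : ℍ[ℚ, c₁, c₂]) :=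
  stmt14_general O hO (fun x hx hsa =>
    (hOQ x).1 ⟨hx, x.re, QuaternionAlgebra.star_eq_self.1 hsa⟩) D
end

section
/- Let c₁, c₂ ∈ ℚˣ and B = ℍ[ℚ, c₁, c₂]. For N ∈ M₂(B) with entries (n₁₁, n₁₂; n₂₁, n₂₂) set τ(N) = re(n₁₁) + re(n₂₂). Then τ is invariant under conjugation: for every invertible H ∈ M₂(B) and every N ∈ M₂(B), τ(H^{-1}·N·H) = τ(N). -/
open Quaternion Matrix

section Trace

variable {n A S F : Type*} [Fintype n] [AddCommMonoid S] [FunLike F A S]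

theorem map_trace_mul_comm {m : Type*} [Fintype m] [NonUnitalNonAssocSemiring A]
    [AddMonoidHomClass F A S] (f : F) (hf : ∀ a b, f (a * b) = f (b * a))
    (X : Matrix m n A) (Y : Matrix n m A) :
    f (trace (X * Y)) = f (trace (Y * X)) :=
  calc
    f (trace (X * Y)) = ∑ i, ∑ j, f (X i j * Y j i) := by
      simp only [trace, diag_apply, mul_apply, map_sum]
    _ = ∑ i, ∑ j, f (Y j i * X i j) := by simp only [hf]
    _ = ∑ j, ∑ i, f (Y j i * X i j) := Finset.sum_comm
    _ = f (trace (Y * X)) := by simp only [trace, diag_apply, mul_apply, map_sum]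

theorem map_trace_invOf_mul_mul_self [DecidableEq n] [Semiring A] [AddMonoidHomClass F A S]
    (f : F) (hf : ∀ a b, f (a * b) = f (b * a)) (H N : Matrix n n A) [Invertible H] :
    f (trace (⅟H * N * H)) = f (trace N) := by
  rw [mul_assoc, map_trace_mul_comm f hf, mul_assoc, mul_invOf_self, mul_one]

end Trace

theorem quaternionAlgebra_re_mul_comm {R : Type*} [CommRing R] {c₁ c₂ : R}
    (a b : ℍ[R,c₁,c₂]) : (a * b).re = (b * a).re := by
  simp only [QuaternionAlgebra.re_mul]
  ring

theorem stmt16_general {R n : Type*} [CommRing R] [Fintype n] [DecidableEq n] {c₁ c₂ : R}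
    (H N : Matrix n n ℍ[R,c₁,c₂]) [Invertible H] :
    (trace (⅟H * N * H)).re = (trace N).re :=
  map_trace_invOf_mul_mul_self (QuaternionAlgebra.reₗ c₁ 0 c₂) quaternionAlgebra_re_mul_comm H N

/-- For `B = ℍ[ℚ, c₁, c₂]`, the function `τ(N) = re(n₁₁) + re(n₂₂)` on `M₂(B)` is
invariant under conjugation: `τ(H⁻¹ N H) = τ(N)` for every invertible `H`. -/
theorem stmt16 (c₁ c₂ : ℚ) (hc₁ : c₁ ≠ 0) (hc₂ : c₂ ≠ 0)
    (H N : Matrix (Fin 2) (Fin 2) ℍ[ℚ, c₁, c₂]) [Invertible H] :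
    ((⅟H * N * H) 0 0).re + ((⅟H * N * H) 1 1).re
      = (N 0 0).re + (N 1 1).re := by
  simpa only [trace_fin_two, QuaternionAlgebra.re_add] using stmt16_general H N
end
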